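/- Let F(T) ∈ ℤ[T] be a nonconstant polynomial of degree D with no multiple roots. There is a constant C (depending only on D) such that for every odd prime ℓ not dividing the leading coefficient of F and not dividing the discriminant of T·F(T) (the discriminant of F if F(0) = 0), and every integer w with gcd(w, ℓ) = 1, the quantity V_ℓ = #{(v₁, v₂) mod ℓ : gcd(v₁·v₂, ℓ) = 1 and F(v₁)·F(v₂) ≡ w (mod ℓ)} satisfies φ(ℓ)·V_ℓ ≤ φ(ℓ)²·(1 + C/√ℓ), i.e., V_ℓ ≤ (ℓ − 1)·(1 + C/√ℓ). -/

import Mathlib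

open Polynomial

/-!
Stepanov's method, with Hasse derivatives replaced by a tangent vector field. The polynomial
`G = F(x) F(y) - w` is prime: a simple prime factor `q` of `F` divides all its coefficients in `y`
except the constant one and divides the leading one exactly once, which is Eisenstein's criterion
for the reversed polynomial.

For any prime `G` over `𝔽_p` with `∂G/∂y ≠ 0`, the Hamiltonian vector field `δ` of `G` annihilates
`G` and all `p`-th powers. Let `αᵢ` be a basis of the polynomials of degree at most `m` in `x` and
less than `e = deg_y G` in `y`, and consider `f = ∑ αᵢ βᵢ ^ p`. At an `𝔽_p`-point, `δ ^ r f` takes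
the value of `∑ δ ^ r(αᵢ) βᵢ`, so `f` vanishes to order `M = e n` at every point of the curve once
`G` divides these sums for all `r < M`; this is a linear system in the `βᵢ` which has a nonzero
solution of low degree. The `δ`-jets of order `M` at the points with `∂G/∂y ≠ 0` are independent, so
a Bezout count of dimensions bounds the number of points times `M` by the intersection number of `f`
and `G`. The same count, applied to `∑ βᵢ(v) αᵢ` at a point `v` and then to the `βᵢ`, shows that `f`
is not divisible by `G`. Taking `n` of order `√p` gives `p + O(√p)` points.
-/

namespace Stepanov

open Module Polynomial.Bivariate

section VanishingIdeal

variable {R A B : Type*} [CommRing R] [CommRing A] [Algebra R A] [CommRing B]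
  [Algebra R B] {δ : Derivation R A A} {φ : A →ₐ[R] B} {f g h t : A}

lemma iterate_eq_coe_pow (δ : Derivation R A A) (r : ℕ) : δ^[r] = ⇑((δ : A →ₗ[R] A) ^ r) :=
  (Module.End.coe_pow _ r).symm

lemma iterate_mul_of_apply_eq_zero (hg : δ g = 0) (r : ℕ) (f : A) :
    δ^[r] (f * g) = δ^[r] f * g := by
  induction r generalizing f with
  | zero => rfl
  | succ r ih =>
    rw [Function.iterate_succ_apply, Function.iterate_succ_apply, ← ih, δ.leibniz, hg, smul_zero,
      zero_add, smul_eq_mul, mul_comm]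

lemma map_iterate_mul_eq_zero {M N r : ℕ} (hf : ∀ s < M, φ (δ^[s] f) = 0)
    (hg : ∀ s < N, φ (δ^[s] g) = 0) (hr : r < M + N) : φ (δ^[r] (f * g)) = 0 := by
  induction r generalizing f g M N with
  | zero =>
    rcases Nat.add_pos_iff_pos_or_pos.1 hr with hM | hN
    · simpa using mul_eq_zero_of_left (hf 0 hM) (φ g)
    · simpa using mul_eq_zero_of_right (φ f) (hg 0 hN)
  | succ r ih =>
    have hδf : ∀ s < M - 1, φ (δ^[s] (δ f)) = 0 := fun s hs => hf (s + 1) (by omega)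
    have hδg : ∀ s < N - 1, φ (δ^[s] (δ g)) = 0 := fun s hs => hg (s + 1) (by omega)
    rw [Function.iterate_succ_apply, δ.leibniz, smul_eq_mul, smul_eq_mul, iterate_map_add, map_add,
      ih hf hδg (by omega), ih hg hδf (by omega), add_zero]

variable (δ φ) in
/-- The ideal of the elements that vanish to order at least `M` at the point `φ` along the
vector field `δ`. -/
def vanishingIdeal (M : ℕ) : Ideal A where
  carrier := {f | ∀ r < M, φ (δ^[r] f) = 0}
  zero_mem' r _ := by rw [iterate_map_zero, map_zero]
  add_mem' hf hg r hr := by rw [iterate_map_add, map_add, hf r hr, hg r hr, add_zero]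
  smul_mem' _ _ hf _ hr := map_iterate_mul_eq_zero (N := _) (M := 0) (by simp) hf (by omega)

lemma mul_mem_vanishingIdeal {M N : ℕ} (hf : f ∈ vanishingIdeal δ φ M)
    (hg : g ∈ vanishingIdeal δ φ N) : f * g ∈ vanishingIdeal δ φ (M + N) :=
  fun _ => map_iterate_mul_eq_zero hf hg

lemma mem_vanishingIdeal_one : f ∈ vanishingIdeal δ φ 1 ↔ φ f = 0 := by
  simp [vanishingIdeal]

lemma pow_mem_vanishingIdeal (hf : φ f = 0) (M : ℕ) : f ^ M ∈ vanishingIdeal δ φ M := by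
  induction M with
  | zero => exact fun r hr => absurd hr r.not_lt_zero
  | succ M ih => exact pow_succ f M ▸ mul_mem_vanishingIdeal ih (mem_vanishingIdeal_one.2 hf)

lemma mem_vanishingIdeal_of_apply_eq_zero (hδ : δ f = 0) (hφ : φ f = 0) (M : ℕ) :
    f ∈ vanishingIdeal δ φ M := by
  rintro (_ | r) -
  · exact hφ
  · rw [Function.iterate_succ_apply, hδ, iterate_map_zero, map_zero]

lemma map_iterate_mul_pow (ht : φ t = 0) (s : ℕ) (h : A) :
    φ (δ^[s] (h * t ^ s)) = s.factorial * φ h * φ (δ t) ^ s := by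
  induction s generalizing h with
  | zero => simp
  | succ s ih =>
    have hδ : δ (h * t ^ (s + 1)) = δ h * t ^ (s + 1) + (s + 1) * (h * δ t) * t ^ s := by
      rw [δ.leibniz, δ.leibniz_pow, Nat.add_sub_cancel]
      simp only [smul_eq_mul, nsmul_eq_mul, Nat.cast_add, Nat.cast_one]
      ring
    have hvan : φ (δ^[s] (δ h * t ^ (s + 1))) = 0 :=
      Ideal.mul_mem_left _ (δ h) (pow_mem_vanishingIdeal ht (s + 1)) s s.lt_succ_self
    rw [Function.iterate_succ_apply, hδ, iterate_map_add, map_add, hvan, zero_add, ih,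
      Nat.factorial_succ]
    simp only [map_mul, map_add, map_natCast, map_one, Nat.cast_mul, Nat.cast_add, Nat.cast_one]
    ring

end VanishingIdeal

section Jet

variable {K A : Type*} [Field K] [CommRing A] [Algebra K A] {δ : Derivation K A A}
  {φ : A →ₐ[K] K}

lemma exists_dvd_forall_map_iterate_eq {h t : A} (ht : φ t = 0) {M : ℕ}
    (hM : ∀ s < M, (s.factorial : K) * φ h * φ (δ t) ^ s ≠ 0) (c : ℕ → K) :
    ∃ f, h ∣ f ∧ ∀ r < M, φ (δ^[r] f) = c r := by
  induction M with
  | zero => exact ⟨0, dvd_zero h, by simp⟩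
  | succ M ih =>
    obtain ⟨f, hf, hfc⟩ := ih fun s hs => hM s (hs.trans M.lt_succ_self)
    have hlead : φ (δ^[M] (h * t ^ M)) ≠ 0 :=
      (map_iterate_mul_pow ht M h).trans_ne (hM M M.lt_succ_self)
    set a := (c M - φ (δ^[M] f)) / φ (δ^[M] (h * t ^ M))
    refine ⟨f + a • (h * t ^ M), dvd_add hf (dvd_smul_of_dvd a (dvd_mul_right h _)), fun r hr => ?_⟩
    rw [iterate_map_add, iterate_eq_coe_pow, map_smul, map_add, map_smul, smul_eq_mul,
      ← iterate_eq_coe_pow]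
    rcases Nat.lt_succ_iff_lt_or_eq.1 hr with hr | rfl
    · have hvan : φ (δ^[r] (h * t ^ M)) = 0 :=
        Ideal.mul_mem_left _ h (pow_mem_vanishingIdeal ht M) r hr
      rw [hfc r hr, hvan, mul_zero, add_zero]
    · rw [div_mul_cancel₀ _ hlead, add_sub_cancel]

end Jet

lemma map_iterate_sum_mul_pow {p : ℕ} [Fact p.Prime] {A ι : Type*} [CommRing A]
    [Algebra (ZMod p) A] (δ : Derivation (ZMod p) A A) (φ : A →ₐ[ZMod p] ZMod p) (s : Finset ι)
    (α β : ι → A) (r : ℕ) :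
    φ (δ^[r] (∑ i ∈ s, α i * β i ^ p)) = φ (∑ i ∈ s, δ^[r] (α i) * β i) := by
  have hpow (g : A) : δ (g ^ p) = 0 := by
    rw [δ.leibniz_pow, ← Nat.cast_smul_eq_nsmul (ZMod p), CharP.cast_eq_zero, zero_smul]
  have hsum : δ^[r] (∑ i ∈ s, α i * β i ^ p) = ∑ i ∈ s, δ^[r] (α i * β i ^ p) := by
    simp only [iterate_eq_coe_pow, map_sum]
  simp only [hsum, iterate_mul_of_apply_eq_zero (hpow _), map_sum, map_mul, map_pow, ZMod.pow_card]

section Bidegree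

variable {R : Type*} [CommRing R] {a b c d : ℕ} {f g : R[X][Y]}

lemma coeff_coeff_swap (f : R[X][Y]) (i j : ℕ) :
    ((swap f).coeff i).coeff j = (f.coeff j).coeff i := by
  induction f using Polynomial.induction_on' with
  | add p q hp hq => simp only [map_add, coeff_add, hp, hq]
  | monomial n g =>
    induction g using Polynomial.induction_on' with
    | add p q hp hq => simp only [map_add, coeff_add, hp, hq]
    | monomial m r =>
      rw [swap_monomial_monomial]
      simp only [coeff_monomial]
      split_ifs <;> simp_all [coeff_monomial]

variable (R a b) in
/-- The space of bivariate polynomials of degree at most `a` in `X` and at most `b` in `Y`. -/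
noncomputable def bidegreeLE : Submodule R R[X][Y] :=
  ((degreeLE R[X] a).restrictScalars R).comap (swap (R := R)).toLinearMap ⊓
    (degreeLE R[X] b).restrictScalars R

lemma mem_bidegreeLE : f ∈ bidegreeLE R a b ↔ (swap f).natDegree ≤ a ∧ f.natDegree ≤ b := by
  simp only [bidegreeLE, Submodule.mem_inf, Submodule.mem_comap, AlgEquiv.toLinearMap_apply,
    Submodule.restrictScalars_mem, mem_degreeLE, natDegree_le_iff_degree_le]

lemma mem_bidegreeLE_iff_coeff :
    f ∈ bidegreeLE R a b ↔ ∀ i j, (f.coeff j).coeff i ≠ 0 → i ≤ a ∧ j ≤ b := by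
  rw [mem_bidegreeLE, natDegree_le_iff_coeff_eq_zero, natDegree_le_iff_coeff_eq_zero]
  constructor
  · rintro ⟨ha, hb⟩ i j hij
    refine ⟨not_lt.1 fun hi => hij ?_, not_lt.1 fun hj => hij ?_⟩
    · rw [← coeff_coeff_swap, ha i hi, coeff_zero]
    · rw [hb j hj, coeff_zero]
  · refine fun h => ⟨fun i hi => ?_, fun j hj => ?_⟩
    · ext j
      rw [coeff_coeff_swap]
      exact of_not_not fun hij => hi.not_ge (h i j hij).1
    · ext i
      exact of_not_not fun hij => hj.not_ge (h i j hij).2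

lemma bidegreeLE_mono (hac : a ≤ c) (hbd : b ≤ d) : bidegreeLE R a b ≤ bidegreeLE R c d :=
  fun _ hf => mem_bidegreeLE.2 <|
    (mem_bidegreeLE.1 hf).imp (·.trans hac) (·.trans hbd)

lemma mul_mem_bidegreeLE (hf : f ∈ bidegreeLE R a b) (hg : g ∈ bidegreeLE R c d) :
    f * g ∈ bidegreeLE R (a + c) (b + d) := by
  rw [mem_bidegreeLE] at hf hg ⊢
  exact ⟨map_mul swap f g ▸ natDegree_mul_le_of_le hf.1 hg.1, natDegree_mul_le_of_le hf.2 hg.2⟩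

lemma pow_mem_bidegreeLE (hf : f ∈ bidegreeLE R a b) (n : ℕ) :
    f ^ n ∈ bidegreeLE R (n * a) (n * b) := by
  rw [mem_bidegreeLE] at hf ⊢
  exact ⟨map_pow swap f n ▸ natDegree_pow_le_of_le n hf.1, natDegree_pow_le_of_le n hf.2⟩

lemma C_mem_bidegreeLE {q : R[X]} (hq : q.natDegree ≤ a) : C q ∈ bidegreeLE R a 0 :=
  mem_bidegreeLE.2 ⟨swap_C q ▸ natDegree_map_le.trans hq, (natDegree_C q).le⟩

lemma swap_mem_bidegreeLE (hf : f ∈ bidegreeLE R a b) : swap f ∈ bidegreeLE R b a := by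
  rw [mem_bidegreeLE] at hf ⊢
  exact ⟨(swap_swap_apply f).symm ▸ hf.2, hf.1⟩

lemma derivative_mem_bidegreeLE (hf : f ∈ bidegreeLE R a b) :
    derivative f ∈ bidegreeLE R a (b - 1) := by
  rw [mem_bidegreeLE_iff_coeff] at hf ⊢
  intro i j hij
  rw [coeff_derivative, ← Nat.cast_succ, ← nsmul_eq_mul', coeff_smul] at hij
  have := hf i (j + 1) (right_ne_zero_of_smul hij)
  omega

variable (R) in
lemma bidegreeLE_eq_span (a b : ℕ) :
    bidegreeLE R a b = Submodule.span R
      ((Polynomial.basisMonomials R).smulTower (Polynomial.basisMonomials R[X]) ''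
        Set.Iic (a, b)) := by
  ext f
  rw [Basis.mem_span_image, mem_bidegreeLE_iff_coeff]
  have hrepr (i j : ℕ) : ((Polynomial.basisMonomials R).smulTower
      (Polynomial.basisMonomials R[X])).repr f (i, j) = (f.coeff j).coeff i :=
    Basis.smulTower_repr_mk ..
  simp only [Set.subset_def, Prod.forall, Finset.mem_coe, Finsupp.mem_support_iff, hrepr,
    Set.mem_Iic, Prod.mk_le_mk]

variable (R) in
lemma finrank_bidegreeLE [Nontrivial R] (a b : ℕ) :
    finrank R (bidegreeLE R a b) = (a + 1) * (b + 1) := by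
  rw [bidegreeLE_eq_span, Set.image_eq_range]
  refine (finrank_span_eq_card ((Basis.linearIndependent _).comp _ Subtype.val_injective)).trans ?_
  rw [← Set.toFinset_card, Set.toFinset_Iic, ← Finset.Iic_product_Iic, Finset.card_product,
    Nat.card_Iic, Nat.card_Iic]

instance : Module.Finite R (bidegreeLE R a b) := by
  rw [bidegreeLE_eq_span]
  exact Module.Finite.span_of_finite R ((Set.finite_Iic _).image _)

instance : Module.Free R (bidegreeLE R a b) := by
  rw [bidegreeLE_eq_span, Set.image_eq_range]
  exact Module.Free.of_basis
    (Basis.span ((Basis.linearIndependent _).comp _ Subtype.val_injective))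

lemma exists_map_bidegreeLE_eq_top {E : Type*} [AddCommGroup E] [Module R E] [Module.Finite R E]
    {ψ : R[X][Y] →ₗ[R] E} (hψ : Function.Surjective ψ) :
    ∃ Z, (bidegreeLE R Z Z).map ψ = ⊤ := by
  obtain ⟨s, hs⟩ := Module.finite_def.1 ‹Module.Finite R E›
  let σ := Function.surjInv hψ
  refine ⟨s.sup fun e => max (swap (σ e)).natDegree (σ e).natDegree, top_unique ?_⟩
  rw [← hs, Submodule.span_le]
  intro e he
  have hle := Finset.le_sup (f := fun e => max (swap (σ e)).natDegree (σ e).natDegree) he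
  exact ⟨σ e, mem_bidegreeLE.2 (max_le_iff.1 hle), Function.surjInv_eq hψ e⟩

end Bidegree

section Hamiltonian

variable {R : Type*} [CommRing R] {a b d e : ℕ} {f G : R[X][Y]}

variable (R) in
/-- Differentiation of bivariate polynomials with respect to the inner variable `X`. -/
noncomputable def derivativeX : Derivation R R[X][Y] R[X][Y] :=
  Derivation.mk' ((swap (R := R)).toLinearMap ∘ₗ (derivative.restrictScalars R) ∘ₗ
    (swap (R := R)).toLinearMap) fun f g => by simp [swap_swap_apply, mul_comm, add_comm]

lemma derivativeX_apply (f : R[X][Y]) : derivativeX R f = swap (derivative (swap f)) := rfl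

/-- The Hamiltonian vector field `G_Y ∂_X - G_X ∂_Y` of `G`, which is tangent to the level curves
of `G`. -/
noncomputable def hamiltonian (G : R[X][Y]) : Derivation R R[X][Y] R[X][Y] :=
  derivative G • derivativeX R - derivativeX R G • derivative'.restrictScalars R

lemma hamiltonian_apply (G f : R[X][Y]) :
    hamiltonian G f = derivative G * derivativeX R f - derivativeX R G * derivative f := rfl

lemma hamiltonian_self (G : R[X][Y]) : hamiltonian G G = 0 := by
  rw [hamiltonian_apply, mul_comm, sub_self]

lemma hamiltonian_C_X_sub_C (G : R[X][Y]) (x : R) :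
    hamiltonian G (C (X - C x)) = derivative G := by
  simp [hamiltonian_apply, derivativeX_apply, swap_C]

lemma derivativeX_mem_bidegreeLE (hf : f ∈ bidegreeLE R a b) :
    derivativeX R f ∈ bidegreeLE R (a - 1) b :=
  swap_mem_bidegreeLE (derivative_mem_bidegreeLE (swap_mem_bidegreeLE hf))

lemma hamiltonian_iterate_mem_bidegreeLE (hG : G ∈ bidegreeLE R d e) (hf : f ∈ bidegreeLE R a b)
    (r : ℕ) : (hamiltonian G)^[r] f ∈ bidegreeLE R (a + r * d) (b + r * e) := by
  induction r with
  | zero => simpa using hf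
  | succ r ih =>
    rw [Function.iterate_succ_apply', hamiltonian_apply]
    refine sub_mem
      (bidegreeLE_mono ?_ ?_ (mul_mem_bidegreeLE (derivative_mem_bidegreeLE hG)
        (derivativeX_mem_bidegreeLE ih)))
      (bidegreeLE_mono ?_ ?_ (mul_mem_bidegreeLE (derivativeX_mem_bidegreeLE hG)
        (derivative_mem_bidegreeLE ih))) <;>
    rw [add_one_mul] <;> omega

end Hamiltonian

section Bezout

variable {K : Type*} [Field K] {a b : ℕ} {f G : K[X][Y]}

lemma mul_mem_bidegreeLE_iff (hG : G ≠ 0) :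
    G * f ∈ bidegreeLE K ((swap G).natDegree + a) (G.natDegree + b) ↔ f ∈ bidegreeLE K a b := by
  rcases eq_or_ne f 0 with rfl | hf
  · simp
  · have hswap {g : K[X][Y]} (hg : g ≠ 0) : swap g ≠ 0 := by simpa using hg
    rw [mem_bidegreeLE, mem_bidegreeLE, map_mul, natDegree_mul hG hf,
      natDegree_mul (hswap hG) (hswap hf), add_le_add_iff_left, add_le_add_iff_left]

lemma map_mulLeft_bidegreeLE_le {c d : ℕ} (hf : f ∈ bidegreeLE K a b) :
    (bidegreeLE K c d).map (LinearMap.mulLeft K f) ≤ bidegreeLE K (a + c) (b + d) :=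
  Submodule.map_le_iff_le_comap.2 fun _ => mul_mem_bidegreeLE hf

lemma finrank_map_mulLeft_bidegreeLE (hf : f ≠ 0) (a b : ℕ) :
    finrank K ((bidegreeLE K a b).map (LinearMap.mulLeft K f)) = (a + 1) * (b + 1) := by
  rw [← finrank_bidegreeLE K a b]
  exact (Submodule.equivMapOfInjective _ (mul_right_injective₀ hf) _).finrank_eq.symm

lemma map_mulLeft_inf_map_mulLeft_le (hG : Prime G) (hGf : ¬ G ∣ f) (a b c d : ℕ) :
    (bidegreeLE K c d).map (LinearMap.mulLeft K G) ⊓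
      (bidegreeLE K ((swap G).natDegree + a) (G.natDegree + b)).map (LinearMap.mulLeft K f) ≤
    (bidegreeLE K a b).map (LinearMap.mulLeft K (f * G)) := by
  intro x hx
  simp only [Submodule.mem_inf, Submodule.mem_map, LinearMap.mulLeft_apply] at hx ⊢
  obtain ⟨⟨h, -, rfl⟩, k, hk, hkh⟩ := hx
  obtain ⟨k', rfl⟩ := (hG.dvd_or_dvd (hkh ▸ dvd_mul_right G h)).resolve_left hGf
  exact ⟨k', (mul_mem_bidegreeLE_iff hG.ne_zero).1 hk, (mul_assoc f G k').trans hkh⟩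

lemma finrank_add_finrank_le_of_le_ker {V E : Type*} [AddCommGroup V] [Module K V]
    [AddCommGroup E] [Module K E] {ψ : V →ₗ[K] E} {N U : Submodule K V} [Module.Finite K U]
    (hU : U.map ψ = ⊤) (hNU : N ≤ U) (hN : N ≤ ψ.ker) :
    finrank K E + finrank K N ≤ finrank K U := by
  have hker : N.comap U.subtype ≤ (ψ.domRestrict U).ker := fun _ hx => hN hx
  rw [← (ψ.domRestrict U).finrank_range_add_finrank_ker, LinearMap.range_domRestrict, hU,
    finrank_top, ← (Submodule.comapSubtypeEquivOfLe hNU).finrank_eq]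
  exact Nat.add_le_add_left (Submodule.finrank_mono hker) _

-- Writing `P a b` for the polynomials of bidegree at most `(a, b)`, the codimension of
-- `G • P (z + a) (z + b) + f • P (z + d) (z + e)` in `P (z + a + d) (z + b + e)` does not depend
-- on `z`, because the two summands meet in `f • G • P z z`.
lemma finrank_le_of_mul_mem_ker (hG : Prime G) (hf : f ∈ bidegreeLE K a b) (hGf : ¬ G ∣ f)
    {E : Type*} [AddCommGroup E] [Module K E] [Module.Finite K E] {ψ : K[X][Y] →ₗ[K] E}
    (hψ : Function.Surjective ψ) (hψG : ∀ h, ψ (G * h) = 0) (hψf : ∀ h, ψ (f * h) = 0) :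
    finrank K E ≤ a * G.natDegree + (swap G).natDegree * b := by
  have hf0 : f ≠ 0 := fun h => hGf (h ▸ dvd_zero G)
  obtain ⟨z, hz⟩ := exists_map_bidegreeLE_eq_top hψ
  have hinf := map_mulLeft_inf_map_mulLeft_le hG hGf z z (a + z) (b + z)
  have hGmem : G ∈ bidegreeLE K (swap G).natDegree G.natDegree := mem_bidegreeLE.2 ⟨le_rfl, le_rfl⟩
  have hGle := map_mulLeft_bidegreeLE_le (c := a + z) (d := b + z) hGmem
  generalize (swap G).natDegree = d at *
  generalize G.natDegree = e at *
  set NG := (bidegreeLE K (a + z) (b + z)).map (LinearMap.mulLeft K G)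
  set Nf := (bidegreeLE K (d + z) (e + z)).map (LinearMap.mulLeft K f)
  have hfle : Nf ≤ bidegreeLE K (d + (a + z)) (e + (b + z)) :=
    (map_mulLeft_bidegreeLE_le hf).trans
      (bidegreeLE_mono (add_left_comm ..).le (add_left_comm ..).le)
  have hker : NG ⊔ Nf ≤ ψ.ker :=
    sup_le (Submodule.map_le_iff_le_comap.2 fun h _ => hψG h)
      (Submodule.map_le_iff_le_comap.2 fun h _ => hψf h)
  have htop : (bidegreeLE K (d + (a + z)) (e + (b + z))).map ψ = ⊤ :=
    top_unique (hz ▸ Submodule.map_mono (bidegreeLE_mono (by omega) (by omega)))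
  have hcodim := finrank_add_finrank_le_of_le_ker htop (sup_le hGle hfle) hker
  have hsup := Submodule.finrank_sup_add_finrank_inf_eq NG Nf
  have hinf_rank := Submodule.finrank_mono hinf
  rw [finrank_bidegreeLE] at hcodim
  rw [finrank_map_mulLeft_bidegreeLE hG.ne_zero, finrank_map_mulLeft_bidegreeLE hf0] at hsup
  rw [finrank_map_mulLeft_bidegreeLE (mul_ne_zero hf0 hG.ne_zero)] at hinf_rank
  linarith

lemma exists_evalEval_eq_zero_and_ne_zero
    {v v' : K × K} (h : v ≠ v') :
    ∃ l : K[X][Y], l.evalEval v'.1 v'.2 = 0 ∧ l.evalEval v.1 v.2 ≠ 0 := by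
  by_cases hX : v.1 = v'.1
  · exact ⟨X - C (C v'.2), by simp, by simpa [sub_eq_zero] using fun hY => h (Prod.ext hX hY)⟩
  · exact ⟨C (X - C v'.1), by simp [evalEval_C], by simpa [evalEval_C, sub_eq_zero] using hX⟩

lemma aevalAeval_eq_evalEval (x y : K) (f : K[X][Y]) :
    aevalAeval (R := K) x y f = f.evalEval x y :=
  congrFun (coe_aevalAeval_eq_evalEval x y) f

variable (δ : Derivation K K[X][Y] K[X][Y]) (S : Finset (K × K)) (M : ℕ)

/-- The values at the points of `S` of the first `M` iterated derivatives along `δ`. -/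
noncomputable def jets : K[X][Y] →ₗ[K] S × Fin M → K :=
  LinearMap.pi fun i => (aevalAeval (R := K) i.1.1.1 i.1.1.2).toLinearMap ∘ₗ
    (δ : K[X][Y] →ₗ[K] K[X][Y]) ^ (i.2 : ℕ)

variable {δ S M}

lemma jets_apply (f : K[X][Y]) (i : S × Fin M) :
    jets δ S M f i = (δ^[i.2] f).evalEval i.1.1.1 i.1.1.2 := by
  rw [iterate_eq_coe_pow, ← aevalAeval_eq_evalEval]
  rfl

end Bezout

section Jets

variable {K : Type*} [Field K] {a b : ℕ} {f G : K[X][Y]} {S : Finset (K × K)} {M : ℕ}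

lemma exists_evalEval_ne_zero_and_mem_vanishingIdeal (δ : Derivation K K[X][Y] K[X][Y])
    (S : Finset (K × K)) (M : ℕ) (v : K × K) :
    ∃ h : K[X][Y], h.evalEval v.1 v.2 ≠ 0 ∧
      ∀ v' ∈ S, v' ≠ v → h ∈ vanishingIdeal δ (aevalAeval v'.1 v'.2) M := by
  classical
  choose! l hl hlv using fun v' (hv' : v' ≠ v) => exists_evalEval_eq_zero_and_ne_zero hv'.symm
  refine ⟨∏ v' ∈ S.erase v, l v' ^ M, ?_, fun v' hv' hne => ?_⟩
  · simp only [← aevalAeval_eq_evalEval, map_prod, map_pow]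
    refine Finset.prod_ne_zero_iff.2 fun v' hv' => pow_ne_zero M ?_
    rw [aevalAeval_eq_evalEval]
    exact hlv v' (Finset.ne_of_mem_erase hv')
  · refine Ideal.mem_of_dvd _ (Finset.dvd_prod_of_mem _ (Finset.mem_erase.2 ⟨hne, hv'⟩))
      (pow_mem_vanishingIdeal ?_ M)
    rw [aevalAeval_eq_evalEval, hl v' hne]

lemma exists_jets_eq_single [DecidableEq K] (hM : ∀ v ∈ S, ∀ s < M,
      (s.factorial : K) * (derivative G).evalEval v.1 v.2 ^ s ≠ 0) (v : S) (c : ℕ → K) :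
    ∃ f, ∀ i, jets (hamiltonian G) S M f i = if i.1 = v then c i.2 else 0 := by
  obtain ⟨h, hhv, hhS⟩ :=
    exists_evalEval_ne_zero_and_mem_vanishingIdeal (hamiltonian G) S M v
  have ht : aevalAeval (R := K) v.1.1 v.1.2 (C (X - C v.1.1)) = 0 := by
    simp
  have hne (s : ℕ) (hs : s < M) : (s.factorial : K) * aevalAeval (R := K) v.1.1 v.1.2 h *
      aevalAeval (R := K) v.1.1 v.1.2 (hamiltonian G (C (X - C v.1.1))) ^ s ≠ 0 := by
    rw [hamiltonian_C_X_sub_C, aevalAeval_eq_evalEval, aevalAeval_eq_evalEval, mul_right_comm]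
    exact mul_ne_zero (hM v v.2 s hs) hhv
  obtain ⟨f, hhf, hfc⟩ := exists_dvd_forall_map_iterate_eq ht hne c
  refine ⟨f, fun ⟨v', r⟩ => ?_⟩
  rw [jets_apply, ← aevalAeval_eq_evalEval]
  split_ifs with hv'
  · subst hv'
    exact hfc r r.2
  · exact Ideal.mem_of_dvd _ hhf (hhS v' v'.2 (Subtype.coe_ne_coe.2 hv')) r r.2

lemma jets_surjective (hM : ∀ v ∈ S, ∀ s < M,
      (s.factorial : K) * (derivative G).evalEval v.1 v.2 ^ s ≠ 0) :
    Function.Surjective (jets (hamiltonian G) S M) := by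
  classical
  intro c
  choose f hf using fun v : S =>
    exists_jets_eq_single hM v fun r => if hr : r < M then c (v, ⟨r, hr⟩) else 0
  refine ⟨∑ v, f v, ?_⟩
  ext ⟨v, r⟩
  simp [hf, Finset.sum_apply]

lemma card_mul_le_of_mem_vanishingIdeal (hG : Prime G) (hf : f ∈ bidegreeLE K a b)
    (hGf : ¬ G ∣ f) (hS : ∀ v ∈ S, G.evalEval v.1 v.2 = 0)
    (hM : ∀ v ∈ S, ∀ s < M, (s.factorial : K) * (derivative G).evalEval v.1 v.2 ^ s ≠ 0)
    (hfS : ∀ v ∈ S, f ∈ vanishingIdeal (hamiltonian G) (aevalAeval v.1 v.2) M) :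
    S.card * M ≤ a * G.natDegree + (swap G).natDegree * b := by
  have hker {g : K[X][Y]}
      (hg : ∀ v ∈ S, g ∈ vanishingIdeal (hamiltonian G) (aevalAeval v.1 v.2) M) (h : K[X][Y]) :
      jets (hamiltonian G) S M (g * h) = 0 := by
    ext ⟨v, r⟩
    rw [jets_apply, ← aevalAeval_eq_evalEval]
    exact Ideal.mul_mem_right h _ (hg v v.2) r r.2
  have hGS (v) (hv : v ∈ S) : G ∈ vanishingIdeal (hamiltonian G) (aevalAeval v.1 v.2) M :=
    mem_vanishingIdeal_of_apply_eq_zero (hamiltonian_self G)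
      (by rw [aevalAeval_eq_evalEval, hS v hv]) M
  simpa using finrank_le_of_mul_mem_ker hG hf hGf (jets_surjective hM) (hker hGS) (hker hfS)

lemma card_le_of_evalEval_eq_zero (hG : Prime G) (hf : f ∈ bidegreeLE K a b) (hGf : ¬ G ∣ f)
    (hS : ∀ v ∈ S, G.evalEval v.1 v.2 = 0) (hfS : ∀ v ∈ S, f.evalEval v.1 v.2 = 0) :
    S.card ≤ a * G.natDegree + (swap G).natDegree * b := by
  simpa using card_mul_le_of_mem_vanishingIdeal (M := 1) hG hf hGf hS (by simp)
    fun v hv => mem_vanishingIdeal_one.2 (by rw [aevalAeval_eq_evalEval, hfS v hv])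

end Jets

section AuxiliaryPolynomial

variable {K : Type*} [Field K] {G f : K[X][Y]} {a b m n M : ℕ}

lemma eq_zero_of_dvd_of_mem_bidegreeLE (hGe : 0 < G.natDegree) (hGf : G ∣ f)
    (hf : f ∈ bidegreeLE K a (G.natDegree - 1)) : f = 0 :=
  eq_zero_of_dvd_of_natDegree_lt hGf ((mem_bidegreeLE.1 hf).2.trans_lt (Nat.sub_lt hGe one_pos))

lemma exists_ne_zero_forall_mem {V E : Type*} [AddCommGroup V] [Module K V] [Module.Finite K V]
    [AddCommGroup E] [Module K E] {N W : Submodule K E} [Module.Finite K W] (hNW : N ≤ W)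
    (T : Fin M → V →ₗ[K] E) (hT : ∀ r x, T r x ∈ W)
    (h : M * finrank K W < finrank K V + M * finrank K N) : ∃ x ≠ 0, ∀ r, T r x ∈ N := by
  let L : V →ₗ[K] Fin M → W ⧸ N.comap W.subtype :=
    LinearMap.pi fun r => Submodule.mkQ _ ∘ₗ (T r).codRestrict W (hT r)
  have hL : L.ker ≠ ⊥ := by
    refine LinearMap.ker_ne_bot_of_finrank_lt ?_
    rw [← (N.comap W.subtype).finrank_quotient_add_finrank,
      (Submodule.comapSubtypeEquivOfLe hNW).finrank_eq, mul_add, add_lt_add_iff_right] at h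
    rwa [finrank_pi_fintype, Finset.sum_const, Finset.card_univ, Fintype.card_fin, smul_eq_mul]
  obtain ⟨x, hx, hx0⟩ := Submodule.exists_mem_ne_zero_of_ne_bot hL
  refine ⟨x, hx0, fun r => ?_⟩
  exact (Submodule.Quotient.mk_eq_zero (N.comap W.subtype)).1
    (congrFun (LinearMap.mem_ker.1 hx) r)

lemma exists_ne_zero_forall_dvd {V : Type*} [AddCommGroup V] [Module K V] [Module.Finite K V]
    (hG : G ≠ 0) (T : Fin M → V →ₗ[K] K[X][Y])
    (hT : ∀ r x, T r x ∈ bidegreeLE K ((swap G).natDegree + a) (G.natDegree + b))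
    (h : M * (((swap G).natDegree + a + 1) * (G.natDegree + b + 1)) <
      finrank K V + M * ((a + 1) * (b + 1))) :
    ∃ x ≠ 0, ∀ r, G ∣ T r x := by
  rw [← finrank_bidegreeLE K (_ + a), ← finrank_map_mulLeft_bidegreeLE hG a b] at h
  obtain ⟨x, hx, hmem⟩ := exists_ne_zero_forall_mem
    (map_mulLeft_bidegreeLE_le (mem_bidegreeLE.2 ⟨le_rfl, le_rfl⟩)) T hT h
  refine ⟨x, hx, fun r => ?_⟩
  obtain ⟨k, -, hk⟩ := hmem r
  exact ⟨k, hk.symm⟩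

lemma stepanov_dimension_count {d e : ℕ} (he : 0 < e)
    (hm : 4 * d * n + 2 * d * e * n ^ 2 + n ^ 2 ≤ m) :
    e * n * ((d + (m + n + e * n * d) + 1) * (e + (2 * e + e * n * e) + 1)) <
      (m + 1) * e * ((n + 1) * e) +
        e * n * ((m + n + e * n * d + 1) * (2 * e + e * n * e + 1)) := by
  have hm' := Nat.mul_le_mul_left (e * e) hm
  have hd : d * n * e ≤ d * n * e * e := Nat.le_mul_of_pos_right _ he
  have he' : 0 < e * e := Nat.mul_pos he he
  linarith

lemma exists_ne_zero_forall_dvd_sum_iterate_mul {ι : Type*} [Fintype ι] (hGe : 0 < G.natDegree)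
    (hm : 4 * (swap G).natDegree * n + 2 * (swap G).natDegree * G.natDegree * n ^ 2 + n ^ 2 ≤ m)
    (α : Basis ι K (bidegreeLE K m (G.natDegree - 1))) :
    ∃ β : ι → bidegreeLE K n (G.natDegree - 1), β ≠ 0 ∧ ∀ r < G.natDegree * n,
      G ∣ ∑ i, (hamiltonian G)^[r] (α i) * (β i : K[X][Y]) := by
  have hG : G ≠ 0 := fun h => hGe.ne' (h ▸ natDegree_zero)
  have hGmem : G ∈ bidegreeLE K (swap G).natDegree G.natDegree := mem_bidegreeLE.2 ⟨le_rfl, le_rfl⟩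
  have hcard : Fintype.card ι = (m + 1) * G.natDegree := by
    rw [← finrank_eq_card_basis α, finrank_bidegreeLE, Nat.sub_add_cancel hGe]
  let T (r : Fin (G.natDegree * n)) : (ι → bidegreeLE K n (G.natDegree - 1)) →ₗ[K] K[X][Y] :=
    ∑ i, LinearMap.mulLeft K ((hamiltonian G)^[r] (α i)) ∘ₗ Submodule.subtype _ ∘ₗ
      LinearMap.proj i
  have hT (r β) : T r β = ∑ i, (hamiltonian G)^[r] (α i) * (β i : K[X][Y]) := by
    simp [T]
  obtain ⟨β, hβ, hdvd⟩ := exists_ne_zero_forall_dvd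
    (V := ι → bidegreeLE K n (G.natDegree - 1))
    (a := m + n + G.natDegree * n * (swap G).natDegree)
    (b := 2 * G.natDegree + G.natDegree * n * G.natDegree) hG T
    (fun r β => by
      have hX := Nat.mul_le_mul_right (swap G).natDegree r.2.le
      have hY := Nat.mul_le_mul_right G.natDegree r.2.le
      rw [hT]
      exact sum_mem fun i _ => bidegreeLE_mono (by omega) (by omega)
        (mul_mem_bidegreeLE (hamiltonian_iterate_mem_bidegreeLE hGmem (α i).2 r) (β i).2))
    (by
      rw [finrank_pi_fintype, Finset.sum_const, Finset.card_univ, hcard, finrank_bidegreeLE,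
        Nat.sub_add_cancel hGe, smul_eq_mul]
      exact stepanov_dimension_count hGe hm)
  exact ⟨β, hβ, fun r hr => by simpa only [hT] using hdvd ⟨r, hr⟩⟩

end AuxiliaryPolynomial

section Count

variable {p : ℕ} [Fact p.Prime] {G : (ZMod p)[X][Y]} {S : Finset (ZMod p × ZMod p)} {m n : ℕ}

lemma factorial_mul_pow_ne_zero {s : ℕ} (hs : s < p) {x : ZMod p} (hx : x ≠ 0) :
    (s.factorial : ZMod p) * x ^ s ≠ 0 := by
  refine mul_ne_zero ?_ (pow_ne_zero s hx)
  rw [Ne, ZMod.natCast_eq_zero_iff, (Fact.out : p.Prime).dvd_factorial]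
  exact hs.not_ge

lemma not_dvd_sum_mul_pow {ι : Type*} [Fintype ι] (hG : Prime G) (hGe : 0 < G.natDegree)
    (hS : ∀ v ∈ S, G.evalEval v.1 v.2 = 0) (hS' : ∀ v ∈ S, (derivative G).evalEval v.1 v.2 ≠ 0)
    (hp : m * G.natDegree + (swap G).natDegree * (G.natDegree - 1) < p)
    (hcard : n * G.natDegree + (swap G).natDegree * (G.natDegree - 1) < S.card)
    (α : Basis ι (ZMod p) (bidegreeLE (ZMod p) m (G.natDegree - 1)))
    {β : ι → bidegreeLE (ZMod p) n (G.natDegree - 1)} (hβ : β ≠ 0) :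
    ¬ G ∣ ∑ i, (α i : (ZMod p)[X][Y]) * (β i : (ZMod p)[X][Y]) ^ p := by
  intro hdvd
  have hβS (v) (hv : v ∈ S) (i) : (β i : (ZMod p)[X][Y]).evalEval v.1 v.2 = 0 := by
    set φ := aevalAeval (R := ZMod p) v.1 v.2
    let f := ∑ i, (β i : (ZMod p)[X][Y]).evalEval v.1 v.2 • α i
    have hvan : (f : (ZMod p)[X][Y]) ∈ vanishingIdeal (hamiltonian G) φ p := fun r hr => by
      have hGφ := mem_vanishingIdeal_of_apply_eq_zero (φ := φ) (hamiltonian_self G)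
        (by rw [aevalAeval_eq_evalEval, hS v hv]) p
      have := Ideal.mem_of_dvd _ hdvd hGφ r hr
      rw [map_iterate_sum_mul_pow] at this
      simpa only [f, φ, iterate_eq_coe_pow, AddSubmonoidClass.coe_finsetSum, Submodule.coe_smul,
        map_sum, map_smul, map_mul, smul_eq_mul, aevalAeval_eq_evalEval, mul_comm] using this
    have hGf : G ∣ f := by
      by_contra hGf
      have := card_mul_le_of_mem_vanishingIdeal (S := {v}) hG f.2 hGf (by simpa using hS v hv)
        (by simpa using fun s hs => factorial_mul_pow_ne_zero hs (hS' v hv)) (by simpa using hvan)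
      rw [Finset.card_singleton, one_mul] at this
      omega
    exact Fintype.linearIndependent_iff.1 α.linearIndependent _
      (Subtype.ext (eq_zero_of_dvd_of_mem_bidegreeLE hGe hGf f.2)) i
  refine hβ (funext fun i => Subtype.ext ?_)
  refine eq_zero_of_dvd_of_mem_bidegreeLE hGe (by_contra fun hGβ => ?_) (β i).2
  exact hcard.not_ge (card_le_of_evalEval_eq_zero hG (β i).2 hGβ hS fun v hv => hβS v hv i)

lemma card_mul_natDegree_mul_le (hG : Prime G) (hGe : 0 < G.natDegree)
    (hS : ∀ v ∈ S, G.evalEval v.1 v.2 = 0) (hS' : ∀ v ∈ S, (derivative G).evalEval v.1 v.2 ≠ 0)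
    (hm : 4 * (swap G).natDegree * n + 2 * (swap G).natDegree * G.natDegree * n ^ 2 + n ^ 2 ≤ m)
    (hp : m * G.natDegree + (swap G).natDegree * (G.natDegree - 1) < p)
    (hcard : n * G.natDegree + (swap G).natDegree * (G.natDegree - 1) < S.card) :
    S.card * (G.natDegree * n) ≤ (m + p * n) * G.natDegree +
      (swap G).natDegree * (G.natDegree - 1 + p * (G.natDegree - 1)) := by
  let α := Module.finBasis (ZMod p) (bidegreeLE (ZMod p) m (G.natDegree - 1))
  obtain ⟨β, hβ, hdvd⟩ := exists_ne_zero_forall_dvd_sum_iterate_mul hGe hm α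
  have hmem : ∑ i, (α i : (ZMod p)[X][Y]) * (β i : (ZMod p)[X][Y]) ^ p ∈
      bidegreeLE (ZMod p) (m + p * n) (G.natDegree - 1 + p * (G.natDegree - 1)) :=
    sum_mem fun i _ => mul_mem_bidegreeLE (α i).2 (pow_mem_bidegreeLE (β i).2 p)
  have hle : G.natDegree * n ≤ p := by
    have hnm : n ≤ m :=
      (Nat.le_self_pow two_ne_zero n).trans ((Nat.le_add_left (n ^ 2) _).trans hm)
    rw [mul_comm]
    exact (Nat.mul_le_mul_right _ hnm).trans ((Nat.le_add_right _ _).trans hp.le)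
  refine card_mul_le_of_mem_vanishingIdeal hG hmem
    (not_dvd_sum_mul_pow hG hGe hS hS' hp hcard α hβ) hS
    (fun v hv s hs => factorial_mul_pow_ne_zero (hs.trans_le hle) (hS' v hv)) fun v hv r hr => ?_
  obtain ⟨k, hk⟩ := hdvd r hr
  rw [map_iterate_sum_mul_pow, hk, map_mul, aevalAeval_eq_evalEval, hS v hv, zero_mul]

lemma exists_nat_le_le_two_mul {x : ℝ} (hx : 1 ≤ x) : ∃ n : ℕ, 0 < n ∧ n ≤ x ∧ x ≤ 2 * n := by
  have hn : 1 ≤ ⌊x⌋₊ := Nat.one_le_floor_iff x |>.2 hx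
  refine ⟨⌊x⌋₊, hn, Nat.floor_le (by linarith), (Nat.lt_floor_add_one x).le.trans ?_⟩
  have : (1 : ℝ) ≤ ⌊x⌋₊ := by exact_mod_cast hn
  linarith

lemma add_add_le_seven_mul_sq_mul_sq {d e D : ℕ} (hd : d ≤ D) (he : e ≤ D) (hD : 0 < D) :
    4 * d * n + 2 * d * e * n ^ 2 + n ^ 2 ≤ 7 * D ^ 2 * n ^ 2 := by
  have hDn : 4 * D * n ≤ 4 * (D * n) ^ 2 := by
    rw [mul_assoc]
    exact Nat.mul_le_mul_left 4 (Nat.le_self_pow two_ne_zero _)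
  have hD2 : 1 ≤ D ^ 2 := Nat.one_le_pow _ _ hD
  calc 4 * d * n + 2 * d * e * n ^ 2 + n ^ 2
      ≤ 4 * D * n + 2 * D * D * n ^ 2 + D ^ 2 * n ^ 2 := by
        gcongr
        exact Nat.le_mul_of_pos_left _ hD2
    _ ≤ 4 * (D * n) ^ 2 + 2 * D * D * n ^ 2 + D ^ 2 * n ^ 2 := by gcongr
    _ = 7 * D ^ 2 * n ^ 2 := by ring

lemma card_mul_le_of_natDegree_le {D : ℕ} (hG : Prime G) (hGe : 0 < G.natDegree)
    (hGD : G ∈ bidegreeLE (ZMod p) D D) (hS : ∀ v ∈ S, G.evalEval v.1 v.2 = 0)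
    (hS' : ∀ v ∈ S, (derivative G).evalEval v.1 v.2 ≠ 0) (hn : 0 < n)
    (hp : 16 * D ^ 4 * n ^ 2 ≤ p) :
    S.card * n ≤ 7 * D ^ 2 * n ^ 2 + p * n + 2 * D * p := by
  obtain ⟨hd, he⟩ := mem_bidegreeLE.1 hGD
  have hD : 0 < D := hGe.trans_le he
  have hm := add_add_le_seven_mul_sq_mul_sq (n := n) hd he hD
  generalize hdef : (swap G).natDegree * (G.natDegree - 1) = c
  have hcG : c ≤ D * G.natDegree := hdef ▸ Nat.mul_le_mul hd (Nat.sub_le _ 1)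
  have hcD : c ≤ D ^ 2 := hcG.trans ((Nat.mul_le_mul_left D he).trans (sq D).ge)
  have hpow {i j : ℕ} (hi : i ≤ 4) (hj : j ≤ 2) : D ^ i * n ^ j ≤ D ^ 4 * n ^ 2 :=
    Nat.mul_le_mul (Nat.pow_le_pow_right hD hi) (Nat.pow_le_pow_right hn hj)
  have h₀ : 1 ≤ D ^ 4 * n ^ 2 := by simpa using hpow zero_le zero_le
  have h₁ : D ^ 2 ≤ D ^ 4 * n ^ 2 := by simpa using hpow (i := 2) (j := 0) (by simp) zero_le
  rcases le_or_gt S.card (n * G.natDegree + c) with hle | hgt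
  · have hnG : n * G.natDegree ≤ D ^ 4 * n ^ 2 :=
      (Nat.mul_le_mul_left n he).trans (by simpa [mul_comm] using hpow (i := 1) (j := 1))
    have hSp : S.card ≤ p := by linarith
    exact (Nat.mul_le_mul_right n hSp).trans ((Nat.le_add_left _ _).trans (Nat.le_add_right _ _))
  · have hmp : 7 * D ^ 2 * n ^ 2 * G.natDegree + c < p := by
      have h₃ : D ^ 2 * n ^ 2 * G.natDegree ≤ D ^ 4 * n ^ 2 := by
        refine (Nat.mul_le_mul_left _ he).trans (le_of_eq_of_le ?_ (hpow (i := 3) (j := 2) ?_ ?_))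
        · ring
        all_goals simp
      linarith
    have hp1 : 1 ≤ p := (Fact.out : p.Prime).one_le
    refine Nat.le_of_mul_le_mul_right ?_ hGe
    subst hdef
    calc S.card * n * G.natDegree = S.card * (G.natDegree * n) := by ring
      _ ≤ _ := card_mul_natDegree_mul_le hG hGe hS hS' hm hmp hgt
      _ = (7 * D ^ 2 * n ^ 2 + p * n) * G.natDegree +
          (swap G).natDegree * (G.natDegree - 1) * (1 + p) := by ring
      _ ≤ (7 * D ^ 2 * n ^ 2 + p * n) * G.natDegree + D * G.natDegree * (p + p) := by gcongr
      _ = _ := by ring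

lemma card_le_of_derivative_ne_zero {D : ℕ} (hG : Prime G) (hGe : 0 < G.natDegree)
    (hGD : G ∈ bidegreeLE (ZMod p) D D) (hS : ∀ v ∈ S, G.evalEval v.1 v.2 = 0)
    (hS' : ∀ v ∈ S, (derivative G).evalEval v.1 v.2 ≠ 0) (hp : 16 * D ^ 4 ≤ p) :
    (S.card : ℝ) ≤ p + 18 * D ^ 3 * √p := by
  have hD : (1 : ℝ) ≤ D := by exact_mod_cast hGe.trans_le (mem_bidegreeLE.1 hGD).2
  have hsq : √p * √p = (p : ℝ) := Real.mul_self_sqrt p.cast_nonneg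
  have hsqrt : 4 * (D : ℝ) ^ 2 ≤ √p := by
    refine Real.le_sqrt_of_sq_le ?_
    have : (16 : ℝ) * D ^ 4 ≤ p := by exact_mod_cast hp
    linarith
  obtain ⟨n, hn, hnle, hlen⟩ := exists_nat_le_le_two_mul
    ((one_le_div (by positivity : (0 : ℝ) < 4 * D ^ 2)).2 hsqrt)
  rw [le_div_iff₀ (by positivity)] at hnle
  rw [div_le_iff₀ (by positivity)] at hlen
  have hnp : 16 * D ^ 4 * n ^ 2 ≤ p := by
    have : (16 : ℝ) * D ^ 4 * n ^ 2 ≤ p := by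
      nlinarith [mul_self_le_mul_self (by positivity) hnle]
    exact_mod_cast this
  have hcount : (S.card : ℝ) * n ≤ 7 * D ^ 2 * n ^ 2 + p * n + 2 * D * p := by
    exact_mod_cast card_mul_le_of_natDegree_le hG hGe hGD hS hS' hn hnp
  have hn' : (0 : ℝ) < n := by exact_mod_cast hn
  refine le_of_mul_le_mul_right (hcount.trans ?_) hn'
  have h₁ : 7 * (D : ℝ) ^ 2 * n ^ 2 ≤ 2 * D ^ 3 * √p * n := by
    have : (1 : ℝ) ≤ D ^ 3 := one_le_pow₀ hD
    nlinarith [mul_le_mul_of_nonneg_right hnle hn'.le, mul_nonneg (Real.sqrt_nonneg (p : ℝ)) hn'.le]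
  have h₂ : 2 * (D : ℝ) * p ≤ 16 * D ^ 3 * √p * n := by
    nlinarith [mul_le_mul_of_nonneg_left hlen (by positivity : 0 ≤ 2 * D * √p)]
  linarith

end Count

section Curve

lemma irreducible_of_reverse_eisenstein {R : Type*} [CommRing R] [IsDomain R] {P : Ideal R}
    (hP : P.IsPrime) {f : R[X]} (hf0 : f.coeff 0 ∉ P) (hfP : ∀ n ≠ 0, f.coeff n ∈ P)
    (hfd : 0 < f.natDegree) (hlead : f.leadingCoeff ∉ P ^ 2) (hu : f.IsPrimitive) :
    Irreducible f := by
  have hmap : f.map (Ideal.Quotient.mk P) = C (Ideal.Quotient.mk P (f.coeff 0)) := by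
    ext n
    rw [coeff_map, coeff_C]
    split_ifs with hn
    · rw [hn]
    · exact Ideal.Quotient.eq_zero_iff_mem.2 (hfP n hn)
  have hmap0 : f.map (Ideal.Quotient.mk P) ≠ 0 := by
    rwa [hmap, C_ne_zero, Ne, Ideal.Quotient.eq_zero_iff_mem]
  have hlead_mem {g : R[X]} (hgf : g ∣ f) (hg : 0 < g.natDegree) : g.leadingCoeff ∈ P := by
    have hdeg := natDegree_le_of_dvd (Polynomial.map_dvd (Ideal.Quotient.mk P) hgf) hmap0
    rw [hmap, natDegree_C] at hdeg
    rw [← Ideal.Quotient.eq_zero_iff_mem, leadingCoeff, ← coeff_map]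
    exact coeff_eq_zero_of_natDegree_lt (hdeg.trans_lt hg)
  have hunit {g : R[X]} (hgf : g ∣ f) (hg : g.natDegree = 0) : IsUnit g := by
    rw [eq_C_of_natDegree_eq_zero hg] at hgf ⊢
    exact isUnit_C.2 (hu _ hgf)
  refine ⟨fun hf => hfd.ne' (natDegree_eq_zero_of_isUnit hf), fun g h hgh => ?_⟩
  by_contra! ⟨hg, hh⟩
  have hgf : g ∣ f := ⟨h, hgh⟩
  have hhf : h ∣ f := ⟨g, hgh.trans (mul_comm g h)⟩
  refine hlead ?_
  rw [hgh, leadingCoeff_mul, sq]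
  exact Ideal.mul_mem_mul (hlead_mem hgf (Nat.pos_of_ne_zero fun h0 => hg (hunit hgf h0)))
    (hlead_mem hhf (Nat.pos_of_ne_zero fun h0 => hh (hunit hhf h0)))

variable {K : Type*} [Field K] {F q : K[X]} {w : K}

/-- The affine curve `F(x) F(y) = w`, as a bivariate polynomial. -/
noncomputable def productCurve (F : K[X]) (w : K) : K[X][Y] :=
  C F * F.map C - C (C w)

lemma evalEval_productCurve (F : K[X]) (w x y : K) :
    (productCurve F w).evalEval x y = F.eval x * F.eval y - w := by
  simp [productCurve, evalEval_C, evalEval_map_C]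

lemma swap_productCurve (F : K[X]) (w : K) : swap (productCurve F w) = productCurve F w := by
  simp [productCurve, swap_C, swap_map_C, mul_comm]

lemma derivative_productCurve (F : K[X]) (w : K) :
    derivative (productCurve F w) = C F * (derivative F).map C := by
  simp [productCurve, derivative_map]

lemma coeff_zero_productCurve (F : K[X]) (w : K) :
    (productCurve F w).coeff 0 = F * C (F.coeff 0) - C w := by
  simp [productCurve]

lemma coeff_productCurve (F : K[X]) (w : K) {n : ℕ} (hn : n ≠ 0) :
    (productCurve F w).coeff n = F * C (F.coeff n) := by
  simp [productCurve, coeff_C, hn]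

lemma natDegree_productCurve (F : K[X]) (w : K) :
    (productCurve F w).natDegree = F.natDegree := by
  rcases eq_or_ne F 0 with rfl | hF
  · simp [productCurve]
  · rw [productCurve, natDegree_sub_C, natDegree_C_mul hF,
      natDegree_map_eq_of_injective C_injective]

lemma productCurve_mem_bidegreeLE (F : K[X]) (w : K) :
    productCurve F w ∈ bidegreeLE K F.natDegree F.natDegree := by
  rw [mem_bidegreeLE, swap_productCurve, natDegree_productCurve, and_self]

lemma isPrimitive_productCurve (hF : 0 < F.natDegree) (hw : w ≠ 0) :
    (productCurve F w).IsPrimitive := by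
  have hF0 : F ≠ 0 := ne_zero_of_natDegree_gt hF
  intro r hr
  rw [C_dvd_iff_dvd_coeff] at hr
  have hrF : r ∣ F := by
    have := hr F.natDegree
    rw [coeff_productCurve F w hF.ne'] at this
    exact (isUnit_C.2 (leadingCoeff_ne_zero.2 hF0).isUnit).dvd_mul_right.1 this
  have hrw := dvd_sub (hrF.mul_right (C (F.coeff 0))) (coeff_zero_productCurve F w ▸ hr 0)
  rw [sub_sub_cancel] at hrw
  exact isUnit_of_dvd_unit hrw (isUnit_C.2 hw.isUnit)

lemma prime_productCurve (hq : Irreducible q) (hqF : q ∣ F) (hqF' : ¬ q ^ 2 ∣ F) (hw : w ≠ 0) :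
    Prime (productCurve F w) := by
  have hF0 : F ≠ 0 := fun h => hqF' (h ▸ dvd_zero _)
  have hF : 0 < F.natDegree := hq.natDegree_pos.trans_le (natDegree_le_of_dvd hqF hF0)
  have hlead : IsUnit (C F.leadingCoeff) := isUnit_C.2 (leadingCoeff_ne_zero.2 hF0).isUnit
  have hdeg := natDegree_productCurve F w
  refine Irreducible.prime (irreducible_of_reverse_eisenstein
    ((Ideal.span_singleton_prime hq.ne_zero).2 hq.prime) ?_ ?_ ?_ ?_
    (isPrimitive_productCurve hF hw))
  · rw [Ideal.mem_span_singleton, coeff_zero_productCurve, dvd_sub_right (hqF.mul_right _)]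
    exact fun h => hq.not_isUnit (isUnit_of_dvd_unit h (isUnit_C.2 hw.isUnit))
  · intro n hn
    rw [Ideal.mem_span_singleton, coeff_productCurve F w hn]
    exact hqF.mul_right _
  · rwa [hdeg]
  · rw [Ideal.span_singleton_pow, Ideal.mem_span_singleton, leadingCoeff, hdeg,
      coeff_productCurve F w hF.ne']
    exact fun h => hqF' (hlead.dvd_mul_right.1 h)

lemma derivative_ne_zero_of_irreducible_dvd [PerfectField K] (hq : Irreducible q) (hqF : q ∣ F)
    (hqF' : ¬ q ^ 2 ∣ F) : derivative F ≠ 0 := by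
  obtain ⟨k, rfl⟩ := hqF
  intro h
  have hsep : IsCoprime q (derivative q) := PerfectField.separable_of_irreducible hq
  rw [derivative_mul] at h
  have hdvd : q ∣ derivative q * k := by
    rw [eq_neg_of_add_eq_zero_left h]
    exact (dvd_mul_right q _).neg_right
  exact hqF' (sq q ▸ mul_dvd_mul_left q (hsep.dvd_of_dvd_mul_left hdvd))

end Curve

section Zeros

variable {p : ℕ} [Fact p.Prime] {G : (ZMod p)[X][Y]} {S : Finset (ZMod p × ZMod p)} {D : ℕ}

lemma card_le_mul_of_natDegree_pos (hG : Prime G) (hGe : 0 < G.natDegree)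
    (hS : ∀ v ∈ S, G.evalEval v.1 v.2 = 0) : S.card ≤ p * G.natDegree := by
  have hdeg := FiniteField.X_pow_card_sub_X_natDegree_eq (ZMod p) (Fact.out : p.Prime).one_lt
  have hGf : ¬ G ∣ C (X ^ p - X) := fun h =>
    FiniteField.X_pow_card_sub_X_ne_zero (ZMod p) (Fact.out : p.Prime).one_lt
      (C_eq_zero.1 (eq_zero_of_dvd_of_natDegree_lt h ((natDegree_C _).trans_lt hGe)))
  simpa using card_le_of_evalEval_eq_zero hG (C_mem_bidegreeLE hdeg.le) hGf hS
    fun v _ => by simp [evalEval_C, ZMod.pow_card]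

lemma card_le_of_derivative_eq_zero (hG : Prime G) (hG' : derivative G ≠ 0)
    (hGD : G ∈ bidegreeLE (ZMod p) D D) (hS : ∀ v ∈ S, G.evalEval v.1 v.2 = 0)
    (hS' : ∀ v ∈ S, (derivative G).evalEval v.1 v.2 = 0) : S.card ≤ 2 * D ^ 2 := by
  have hGe : G.natDegree ≠ 0 := fun h => hG' (derivative_of_natDegree_zero h)
  have hndvd : ¬ G ∣ derivative G :=
    fun h => hG' (eq_zero_of_dvd_of_natDegree_lt h (natDegree_derivative_lt hGe))
  obtain ⟨hd, he⟩ := mem_bidegreeLE.1 hGD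
  calc S.card ≤ D * G.natDegree + (swap G).natDegree * (D - 1) :=
        card_le_of_evalEval_eq_zero hG (derivative_mem_bidegreeLE hGD) hndvd hS hS'
    _ ≤ D * D + D * D := by gcongr; exact Nat.sub_le D 1
    _ = 2 * D ^ 2 := by ring

lemma card_le_add_mul_sqrt (hG : Prime G) (hG' : derivative G ≠ 0)
    (hGD : G ∈ bidegreeLE (ZMod p) D D) (hS : ∀ v ∈ S, G.evalEval v.1 v.2 = 0) :
    (S.card : ℝ) ≤ p + 20 * D ^ 3 * √p := by
  have hGe : 0 < G.natDegree :=
    Nat.pos_of_ne_zero fun h => hG' (derivative_of_natDegree_zero h)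
  have he := (mem_bidegreeLE.1 hGD).2
  have hD : (1 : ℝ) ≤ D := by exact_mod_cast hGe.trans_le he
  have hsqrt : 1 ≤ √p := Real.one_le_sqrt.2 (by exact_mod_cast (Fact.out : p.Prime).one_le)
  rcases lt_or_ge p (16 * D ^ 4) with hp | hp
  · have hcard : (S.card : ℝ) ≤ p * D := by
      exact_mod_cast (card_le_mul_of_natDegree_pos hG hGe hS).trans (Nat.mul_le_mul_left p he)
    have hsqrt' : √p ≤ 4 * D ^ 2 := by
      have : (p : ℝ) ≤ 16 * D ^ 4 := by exact_mod_cast hp.le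
      exact Real.sqrt_le_iff.2 ⟨by positivity, by linarith⟩
    calc (S.card : ℝ) ≤ √p * √p * D := by rwa [Real.mul_self_sqrt p.cast_nonneg]
      _ ≤ 4 * D ^ 2 * √p * D := by gcongr
      _ = 4 * D ^ 3 * √p := by ring
      _ ≤ p + 20 * D ^ 3 * √p := by
        have : 0 ≤ D ^ 3 * √p := by positivity
        linarith [p.cast_nonneg (α := ℝ)]
  · rw [← S.card_filter_add_card_filter_not fun v => (derivative G).evalEval v.1 v.2 = 0,
      Nat.cast_add]
    have h₀ : ((S.filter fun v => (derivative G).evalEval v.1 v.2 = 0).card : ℝ) ≤ 2 * D ^ 2 := by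
      exact_mod_cast card_le_of_derivative_eq_zero hG hG' hGD
        (fun v hv => hS v (Finset.mem_of_mem_filter v hv)) fun v hv => (Finset.mem_filter.1 hv).2
    have h₁ := card_le_of_derivative_ne_zero
      (S := S.filter fun v => ¬ (derivative G).evalEval v.1 v.2 = 0) hG hGe hGD
      (fun v hv => hS v (Finset.mem_of_mem_filter v hv)) (fun v hv => (Finset.mem_filter.1 hv).2) hp
    have h₂ : (D : ℝ) ^ 2 * 1 ≤ D ^ 3 * √p := by
      gcongr
      norm_num
    linarith

end Zeros

lemma add_mul_sqrt_le {x c : ℝ} (hx : 2 ≤ x) (hc : 1 ≤ c) :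
    x + 20 * c * √x ≤ (x - 1) * (1 + 42 * c / √x) := by
  have hsqrt : 1 ≤ √x := Real.one_le_sqrt.2 (by linarith)
  have hdiv : √x / 2 ≤ (x - 1) / √x := by
    rw [div_le_div_iff₀ two_pos (by linarith), Real.mul_self_sqrt (by linarith)]
    linarith
  have hmul : 1 ≤ c * √x := one_le_mul_of_one_le_of_one_le hc hsqrt
  calc x + 20 * c * √x ≤ x - 1 + 42 * c * (√x / 2) := by linarith
    _ ≤ x - 1 + 42 * c * ((x - 1) / √x) := by gcongr
    _ = (x - 1) * (1 + 42 * c / √x) := by ring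

lemma exists_irreducible_dvd_not_sq_dvd {K : Type*} [Field K] {F : K[X]} (hF : Squarefree F)
    (hF' : 0 < F.natDegree) : ∃ q, Irreducible q ∧ q ∣ F ∧ ¬ q ^ 2 ∣ F := by
  obtain ⟨q, hq, hqF⟩ := WfDvdMonoid.exists_irreducible_factor
    (fun h => hF'.ne' (natDegree_eq_zero_of_isUnit h)) (ne_zero_of_natDegree_gt hF')
  exact ⟨q, hq, hqF, fun h => hq.not_isUnit (hF q (sq q ▸ h))⟩

lemma natDegree_map_zmod {F : ℤ[X]} {n : ℕ} (hF : ¬ (n : ℤ) ∣ F.leadingCoeff) :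
    (F.map (Int.castRingHom (ZMod n))).natDegree = F.natDegree := by
  apply natDegree_map_of_leadingCoeff_ne_zero
  rwa [eq_intCast, Ne, ZMod.intCast_zmod_eq_zero_iff_dvd]

lemma intCast_zmod_ne_zero_of_gcd_eq_one {w : ℤ} {n : ℕ} [Nontrivial (ZMod n)]
    (hw : Int.gcd w n = 1) : (w : ZMod n) ≠ 0 :=
  ((ZMod.coe_int_isUnit_iff_isCoprime w n).2 (Int.isCoprime_iff_gcd_eq_one.2 hw).symm).ne_zero

end Stepanov

open Stepanov

theorem stmt17_general {ℓ : ℕ} [Fact ℓ.Prime] {F q : (ZMod ℓ)[X]} (hq : Irreducible q)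
    (hqF : q ∣ F) (hqF' : ¬ q ^ 2 ∣ F) {w : ZMod ℓ} (hw : w ≠ 0) :
    (Set.ncard {v : ZMod ℓ × ZMod ℓ | F.eval v.1 * F.eval v.2 = w} : ℝ) ≤
      ((ℓ : ℝ) - 1) * (1 + 42 * F.natDegree ^ 3 / √ℓ) := by
  have hF' : derivative F ≠ 0 := derivative_ne_zero_of_irreducible_dvd hq hqF hqF'
  have hF : F ≠ 0 := by
    rintro rfl
    exact hF' derivative_zero
  have hG' : derivative (productCurve F w) ≠ 0 := by
    rw [derivative_productCurve]
    exact mul_ne_zero (C_ne_zero.2 hF) ((map_ne_zero_iff (mapRingHom C)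
      (map_injective C C_injective)).2 hF')
  have hdeg : 0 < F.natDegree := hq.natDegree_pos.trans_le (natDegree_le_of_dvd hqF hF)
  rw [Set.ncard_eq_toFinset_card _ (Set.toFinite _)]
  refine (card_le_add_mul_sqrt (prime_productCurve hq hqF hqF' hw) hG'
    (productCurve_mem_bidegreeLE F w) fun v hv => ?_).trans
      (add_mul_sqrt_le (by exact_mod_cast (Fact.out : ℓ.Prime).two_le)
        (one_le_pow₀ (by exact_mod_cast hdeg)))
  rw [Set.Finite.mem_toFinset] at hv
  rwa [evalEval_productCurve, sub_eq_zero]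

/-- **Estimate (5.3).** Fix `D`. There is a constant `C` depending only on `D` such that:
for every `F ∈ ℤ[T]` nonconstant of degree `D` with no multiple roots, every odd prime `ℓ`
dividing neither the leading coefficient of `F` nor the discriminant of `T·F(T)` (of `F`
itself when `F(0) = 0`) — the latter condition, given `ℓ ∤ lc(F)`, being expressed by
requiring the reduction of `T·F(T)` (resp. `F`) mod `ℓ` to be separable — and every
integer `w` coprime to `ℓ`, the number `V_ℓ` of pairs `(v₁, v₂)` mod `ℓ` with
`gcd(v₁v₂, ℓ) = 1` and `F(v₁)F(v₂) ≡ w (mod ℓ)` satisfies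
`V_ℓ ≤ (ℓ − 1)(1 + C/√ℓ)`, i.e. `φ(ℓ)·V_ℓ ≤ φ(ℓ)²(1 + C/√ℓ)`. -/
theorem stmt17 (D : ℕ) (hD : 0 < D) :
    ∃ C : ℝ, ∀ F : Polynomial ℤ, F.natDegree = D →
      Squarefree (F.map (Int.castRingHom ℚ)) →
      ∀ ℓ : ℕ, ℓ.Prime → ℓ ≠ 2 →
        ¬ (ℓ : ℤ) ∣ F.leadingCoeff →
        Polynomial.Separable
          (if F.eval 0 = 0 then F.map (Int.castRingHom (ZMod ℓ))
           else Polynomial.X * F.map (Int.castRingHom (ZMod ℓ))) →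
        ∀ w : ℤ, Int.gcd w (ℓ : ℤ) = 1 →
          (Set.ncard {v : ZMod ℓ × ZMod ℓ |
              IsUnit v.1 ∧ IsUnit v.2 ∧
              (F.map (Int.castRingHom (ZMod ℓ))).eval v.1
                * (F.map (Int.castRingHom (ZMod ℓ))).eval v.2 = (w : ZMod ℓ)} : ℝ)
            ≤ ((ℓ : ℝ) - 1) * (1 + C / Real.sqrt ℓ) := by
  refine ⟨42 * D ^ 3, fun F hFD _ ℓ hℓ _ hlc hsep w hw => ?_⟩
  have : Fact ℓ.Prime := ⟨hℓ⟩
  have hF : (F.map (Int.castRingHom (ZMod ℓ))).Separable := by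
    split_ifs at hsep
    exacts [hsep, hsep.of_mul_right]
  have hdeg : (F.map (Int.castRingHom (ZMod ℓ))).natDegree = D :=
    (natDegree_map_zmod hlc).trans hFD
  obtain ⟨q, hq, hqF, hqF'⟩ := exists_irreducible_dvd_not_sq_dvd hF.squarefree (hdeg ▸ hD)
  rw [← hdeg]
  refine le_trans (Nat.cast_le.2 (Set.ncard_le_ncard fun _ hv => hv.2.2 : _ ≤ Set.ncard _))
    (stmt17_general hq hqF hqF' (intCast_zmod_ne_zero_of_gcd_eq_one hw))
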